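/- Fix c > 0, and for each integer n > c set p_n = c/n. Then the variance factor n(1-ρ(c/n,n))/δ(c/n,n) decays at rate 1/n; precisely, lim_{n→∞} n² · (1 - ρ(c/n,n))/δ(c/n,n) = (1 - e^{-c})/c. In particular, the variance of the asymptotic consensus value tends to zero as n → ∞ at rate 1/n when the expected degree is held fixed at c. -/

import Mathlib

open Filter

/-!
Write `N = q - q ^ n` with `q = 1 - p`. Then `ρ = p (n - 1) / (N + p (n - 1))`, and the common
denominator cancels from the quotient `(1 - ρ) / δ`, leaving
`n² (1 - ρ) / δ = N / (N / n + p (n - 1))`. If `n p → c`, then `p → 0` and `q ^ n → e⁻ᶜ`, so the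
numerator tends to `1 - e⁻ᶜ` and the denominator to `c`.
-/

open scoped Topology

/-- The ratio `ρ(p, n)` entering the variance factor of the asymptotic consensus value for `n` nodes
and link probability `p`, taken here for any real `p`. It is `0` when its denominator vanishes. -/
noncomputable def consensusRho (p : ℝ) (n : ℕ) : ℝ :=
  p * ((n : ℝ) - 1) / (p * ((n : ℝ) - 2) + 1 - (1 - p) ^ n)

/-- The denominator `δ(p, n) = n + n (n - 1) ρ(p, n)` of the variance factor of the asymptotic
consensus value. -/
noncomputable def consensusDelta (p : ℝ) (n : ℕ) : ℝ :=
  (n : ℝ) + (n : ℝ) * ((n : ℝ) - 1) * consensusRho p n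

/-- The quantity `q - q ^ n`, where `q = 1 - p`; it is the numerator of `1 - ρ(p, n)`. -/
noncomputable def consensusGap (p : ℝ) (n : ℕ) : ℝ :=
  1 - p - (1 - p) ^ n

theorem consensusRho_eq_div_gap_add (p : ℝ) (n : ℕ) :
    consensusRho p n = p * ((n : ℝ) - 1) / (consensusGap p n + p * ((n : ℝ) - 1)) := by
  unfold consensusRho consensusGap
  congr 1
  ring

theorem one_sub_consensusRho {p : ℝ} {n : ℕ} (h : consensusGap p n + p * ((n : ℝ) - 1) ≠ 0) :
    1 - consensusRho p n = consensusGap p n / (consensusGap p n + p * ((n : ℝ) - 1)) := by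
  rw [consensusRho_eq_div_gap_add, one_sub_div h, add_sub_cancel_right]

theorem consensusDelta_eq_div_gap_add {p : ℝ} {n : ℕ}
    (h : consensusGap p n + p * ((n : ℝ) - 1) ≠ 0) :
    consensusDelta p n =
      n * (consensusGap p n + n * (p * ((n : ℝ) - 1))) /
        (consensusGap p n + p * ((n : ℝ) - 1)) := by
  rw [consensusDelta, consensusRho_eq_div_gap_add, mul_div_assoc', add_div' _ _ _ h]
  congr 1
  ring

theorem sq_mul_one_sub_consensusRho_div_consensusDelta {p : ℝ} {n : ℕ} (hn : n ≠ 0)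
    (h : consensusGap p n + p * ((n : ℝ) - 1) ≠ 0) :
    (n : ℝ) ^ 2 * (1 - consensusRho p n) / consensusDelta p n =
      consensusGap p n / (consensusGap p n / n + p * ((n : ℝ) - 1)) := by
  have hn' : (n : ℝ) ≠ 0 := Nat.cast_ne_zero.mpr hn
  rw [one_sub_consensusRho h, consensusDelta_eq_div_gap_add h, mul_div_assoc',
    div_div_div_cancel_right₀ h]
  field_simp

theorem one_sub_exp_neg_add_self_ne_zero {c : ℝ} (hc : c ≠ 0) : 1 - Real.exp (-c) + c ≠ 0 := by
  rcases hc.lt_or_gt with hneg | hpos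
  · have : 1 < Real.exp (-c) := Real.one_lt_exp_iff.mpr (neg_pos.mpr hneg)
    linarith
  · have : Real.exp (-c) < 1 := Real.exp_lt_one_iff.mpr (neg_lt_zero.mpr hpos)
    linarith

section Limits

variable {p : ℕ → ℝ} {c : ℝ}

theorem tendsto_mul_natCast_sub_one (hp : Tendsto (fun n : ℕ => n * p n) atTop (𝓝 c)) :
    Tendsto (fun n : ℕ => p n * ((n : ℝ) - 1)) atTop (𝓝 c) := by
  simpa [mul_sub, mul_comm] using hp.sub (ProbabilityTheory.tendsto_zero_of_tendsto_mul_atTop hp)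

theorem tendsto_consensusGap (hp : Tendsto (fun n : ℕ => n * p n) atTop (𝓝 c)) :
    Tendsto (fun n => consensusGap (p n) n) atTop (𝓝 (1 - Real.exp (-c))) := by
  have hpow : Tendsto (fun n => (1 - p n) ^ n) atTop (𝓝 (Real.exp (-c))) := by
    simpa [sub_eq_add_neg] using
      Real.tendsto_one_add_pow_exp_of_tendsto (g := fun n => -p n) (by simpa using hp.neg)
  have hq := (ProbabilityTheory.tendsto_zero_of_tendsto_mul_atTop hp).const_sub 1
  simpa [consensusGap] using hq.sub hpow

theorem variance_factor_limit_fixed_degree_general (hc : c ≠ 0)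
    (hp : Tendsto (fun n : ℕ => n * p n) atTop (𝓝 c)) :
    Tendsto (fun n : ℕ => (n : ℝ) ^ 2 * (1 - consensusRho (p n) n) / consensusDelta (p n) n)
      atTop (𝓝 ((1 - Real.exp (-c)) / c)) := by
  have hgap := tendsto_consensusGap hp
  have hdeg := tendsto_mul_natCast_sub_one hp
  have hden : Tendsto (fun n : ℕ => consensusGap (p n) n / n + p n * ((n : ℝ) - 1))
      atTop (𝓝 c) := by
    simpa using (hgap.div_atTop tendsto_natCast_atTop_atTop).add hdeg
  refine (hgap.div hden hc).congr' ?_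
  filter_upwards [eventually_ne_atTop 0,
    (hgap.add hdeg).eventually_ne (one_sub_exp_neg_add_self_ne_zero hc)] with n hn hne
  exact (sq_mul_one_sub_consensusRho_div_consensusDelta hn hne).symm

end Limits

theorem tendsto_natCast_mul_const_div {𝕜 : Type*} [Field 𝕜] [CharZero 𝕜] [TopologicalSpace 𝕜]
    (c : 𝕜) : Tendsto (fun n : ℕ => n * (c / n)) atTop (𝓝 c) := by
  refine tendsto_const_nhds.congr' ?_
  filter_upwards [eventually_ne_atTop 0] with n hn
  exact (mul_div_cancel₀ c (Nat.cast_ne_zero.mpr hn)).symm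

/-- Fix `c > 0` and set `p_n = c/n`. The variance factor
`n(1-ρ(c/n,n))/δ(c/n,n)` decays at rate `1/n`: precisely,
`lim_{n→∞} n²·(1 - ρ(c/n,n))/δ(c/n,n) = (1 - e^{-c})/c`, where
`ρ(p,n) = p(n-1)/(p(n-2)+1-(1-p)^n)` and `δ(p,n) = n + n(n-1)ρ(p,n)`. In particular, the
variance of the asymptotic consensus value tends to zero at rate `1/n` as `n → ∞` when
the expected degree is held fixed at `c`. -/
theorem variance_factor_limit_fixed_degree (c : ℝ) (hc : 0 < c) :
    Tendsto
      (fun n : ℕ =>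
        ((n : ℝ) ^ 2 *
          (1 - (c / n) * ((n : ℝ) - 1) /
              ((c / n) * ((n : ℝ) - 2) + 1 - (1 - c / n) ^ n)) /
            ((n : ℝ) + (n : ℝ) * ((n : ℝ) - 1) *
              ((c / n) * ((n : ℝ) - 1) /
                ((c / n) * ((n : ℝ) - 2) + 1 - (1 - c / n) ^ n)))))
      atTop (nhds ((1 - Real.exp (-c)) / c)) :=
  variance_factor_limit_fixed_degree_general hc.ne' (tendsto_natCast_mul_const_div c)
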